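/- arXiv:1910.10116 — 2 statements merged into one kernel-verified Lean document; each statement's English description precedes it below -/
import Mathlib

section
/- For every real q with 0 < q ≤ 1/2, the inequality log(q³ + (1−q)³) / log(q² + (1−q)²) ≥ 3/2 + 3q/4 holds (both logarithms are negative for 0 < q ≤ 1/2, so the quotient is a well-defined nonnegative real). -/
/-!
Put `t = q (1 - q)`, so that `q ^ 2 + (1 - q) ^ 2 = 1 - 2 t` and `q ^ 3 + (1 - q) ^ 3 = 1 - 3 t`.
Since both logarithms are negative, the claim is
`(3 / 2 + 3 q / 4) * (-log (1 - 2 t)) ≤ -log (1 - 3 t)`.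
Both sides are estimated with the series
`-log (1 - x) = log ((1 + y) / (1 - y)) = 2 (y + y ^ 3 / 3 + ⋯)`, where `y = x / (2 - x)`:
two terms bound the right side from below (`lower_bound`), and two terms with a geometric tail
bound the left side from above (`upper_bound`). These rational bounds agree with the logarithms to
an order in `t` high enough to keep the leading term, of order `q ^ 3`, of the difference of the
two sides. After clearing denominators, what is left is that a polynomial of degree 13 is
nonnegative on `[0, 1 / 2]`, which holds because its coefficients in the Bernstein basis of that
interval are positive (`remainder_nonneg`).
-/

/-- The cofactor of `t * q ^ 2` left over in `rational_bound` once denominators are cleared. -/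
theorem remainder_nonneg (q : ℝ) (h0 : 0 ≤ q) (h1 : q ≤ 1 / 2) :
    0 ≤ 192 - 1464 * q + 5442 * q ^ 2 - 12738 * q ^ 3 + 20310 * q ^ 4 - 22542 * q ^ 5
      + 17010 * q ^ 6 - 8730 * q ^ 7 + 4698 * q ^ 8 - 5994 * q ^ 9 + 7398 * q ^ 10
      - 5670 * q ^ 11 + 2430 * q ^ 12 - 486 * q ^ 13 := by
  have hr : 0 ≤ 1 - 2 * q := by linarith
  -- the expansion in the basis `(2 q) ^ i * (1 - 2 q) ^ (13 - i)`
  have h : 192 - 1464 * q + 5442 * q ^ 2 - 12738 * q ^ 3 + 20310 * q ^ 4 - 22542 * q ^ 5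
      + 17010 * q ^ 6 - 8730 * q ^ 7 + 4698 * q ^ 8 - 5994 * q ^ 9 + 7398 * q ^ 10
      - 5670 * q ^ 11 + 2430 * q ^ 12 - 486 * q ^ 13
      = 192 * (1 - 2 * q) ^ 13 + 1764 * (2 * q) * (1 - 2 * q) ^ 12
        + 15105 / 2 * (2 * q) ^ 2 * (1 - 2 * q) ^ 11 + 79893 / 4 * (2 * q) ^ 3 *
        (1 - 2 * q) ^ 10 + 291315 / 8 * (2 * q) ^ 4 * (1 - 2 * q) ^ 9
        + 773043 / 16 * (2 * q) ^ 5 * (1 - 2 * q) ^ 8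
        + 1534425 / 32 * (2 * q) ^ 6 * (1 - 2 * q) ^ 7
        + 2302593 / 64 * (2 * q) ^ 7 * (1 - 2 * q) ^ 6
        + 2604453 / 128 * (2 * q) ^ 8 * (1 - 2 * q) ^ 5
        + 2181753 / 256 * (2 * q) ^ 9 * (1 - 2 * q) ^ 4
        + 1303395 / 512 * (2 * q) ^ 10 * (1 - 2 * q) ^ 3
        + 516135 / 1024 * (2 * q) ^ 11 * (1 - 2 * q) ^ 2
        + 116295 / 2048 * (2 * q) ^ 12 * (1 - 2 * q) + 9831 / 4096 * (2 * q) ^ 13 := by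
    ring
  rw [h]
  positivity

/-- Two terms of the series for `log ((1 + y) / (1 - y))` at `y = 3 t / (2 - 3 t)`. -/
theorem lower_bound (t : ℝ) (h0 : 0 ≤ t) (h1 : t ≤ 1 / 4) :
    6 * t / (2 - 3 * t) + 18 * t ^ 3 / (2 - 3 * t) ^ 3 ≤ -Real.log (1 - 3 * t) := by
  have hd : 0 < 2 - 3 * t := by linarith
  have hA : 0 < 1 - 3 * t := by linarith
  have h := Real.sum_range_le_log_div (x := 3 * t / (2 - 3 * t)) (by positivity)
    (by rw [div_lt_one hd]; linarith) 2
  have e : (1 + 3 * t / (2 - 3 * t)) / (1 - 3 * t / (2 - 3 * t)) = (1 - 3 * t)⁻¹ := by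
    have e1 : 1 + 3 * t / (2 - 3 * t) = 2 / (2 - 3 * t) := by field_simp; ring
    have e2 : 1 - 3 * t / (2 - 3 * t) = 2 * (1 - 3 * t) / (2 - 3 * t) := by field_simp; ring
    rw [e1, e2]
    field_simp
  rw [e, Real.log_inv] at h
  norm_num [Finset.sum_range_succ] at h
  have e3 : 6 * t / (2 - 3 * t) + 18 * t ^ 3 / (2 - 3 * t) ^ 3
      = 2 * (3 * t / (2 - 3 * t) + (3 * t / (2 - 3 * t)) ^ 3 / 3) := by
    field_simp
    ring
  linarith

/-- Two terms and a geometric tail of the series for `log ((1 + y) / (1 - y))` at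
`y = t / (1 - t)`, where `1 - y ^ 2 = (1 - 2 t) / (1 - t) ^ 2`. -/
theorem upper_bound (t : ℝ) (h0 : 0 ≤ t) (h1 : t ≤ 1 / 4) :
    -Real.log (1 - 2 * t) ≤ 2 * t / (1 - t) + 2 * t ^ 3 / (3 * (1 - t) ^ 3)
      + 2 * t ^ 5 / ((1 - t) ^ 3 * (1 - 2 * t)) := by
  have hd : 0 < 1 - t := by linarith
  have hB : 0 < 1 - 2 * t := by linarith
  have h := Real.log_div_le_sum_range_add (x := t / (1 - t)) (by positivity)
    (by rw [div_lt_one hd]; linarith) 2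
  have e : (1 + t / (1 - t)) / (1 - t / (1 - t)) = (1 - 2 * t)⁻¹ := by
    have e1 : 1 + t / (1 - t) = 1 / (1 - t) := by field_simp; ring
    have e2 : 1 - t / (1 - t) = (1 - 2 * t) / (1 - t) := by field_simp; ring
    rw [e1, e2]
    field_simp
  have e2 : 1 - (t / (1 - t)) ^ 2 = (1 - 2 * t) / (1 - t) ^ 2 := by field_simp; ring
  rw [e, Real.log_inv, e2] at h
  norm_num [Finset.sum_range_succ] at h
  have e3 : 2 * t / (1 - t) + 2 * t ^ 3 / (3 * (1 - t) ^ 3)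
      + 2 * t ^ 5 / ((1 - t) ^ 3 * (1 - 2 * t))
      = 2 * (t / (1 - t) + (t / (1 - t)) ^ 3 / 3
        + (t / (1 - t)) ^ 5 / ((1 - 2 * t) / (1 - t) ^ 2)) := by
    field_simp
  linarith

/-- The upper bound for `-log (1 - 2 t)`, multiplied by `3 / 2 + 3 q / 4`, stays below the lower
bound for `-log (1 - 3 t)`. -/
theorem rational_bound (q t : ℝ) (h0 : 0 ≤ q) (h1 : q ≤ 1 / 2) (ht : t = q * (1 - q))
    (ht0 : 0 ≤ t) (ht1 : t ≤ 1 / 4) :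
    (3 / 2 + 3 * q / 4) * (2 * t / (1 - t) + 2 * t ^ 3 / (3 * (1 - t) ^ 3)
      + 2 * t ^ 5 / ((1 - t) ^ 3 * (1 - 2 * t)))
      ≤ 6 * t / (2 - 3 * t) + 18 * t ^ 3 / (2 - 3 * t) ^ 3 := by
  have hd : 0 < 1 - t := by linarith
  have hB : 0 < 1 - 2 * t := by linarith
  have hC : 0 < 2 - 3 * t := by linarith
  have hR := remainder_nonneg q h0 h1
  have eL : 6 * t / (2 - 3 * t) + 18 * t ^ 3 / (2 - 3 * t) ^ 3
      = t * (6 * (2 - 3 * t) ^ 2 + 18 * t ^ 2) / (2 - 3 * t) ^ 3 := by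
    field_simp
  have eU : (3 / 2 + 3 * q / 4) * (2 * t / (1 - t) + 2 * t ^ 3 / (3 * (1 - t) ^ 3)
      + 2 * t ^ 5 / ((1 - t) ^ 3 * (1 - 2 * t)))
      = t * ((6 + 3 * q) * (6 * (1 - t) ^ 2 * (1 - 2 * t) + 2 * t ^ 2 * (1 - 2 * t) + 6 * t ^ 4))
        / (12 * (1 - t) ^ 3 * (1 - 2 * t)) := by
    field_simp
    ring
  rw [eL, eU, div_le_div_iff₀ (by positivity) (by positivity), ← sub_nonneg]
  have hP := mul_nonneg ht0 (mul_nonneg (sq_nonneg q) hR)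
  -- the cross-multiplied difference is exactly `t * q ^ 2` times the polynomial in `hR`
  convert hP using 1
  subst ht
  ring

theorem stmt_2 (q : ℝ) (h0 : 0 < q) (h1 : q ≤ 1 / 2) :
    Real.log (q ^ 3 + (1 - q) ^ 3) / Real.log (q ^ 2 + (1 - q) ^ 2)
      ≥ 3 / 2 + 3 * q / 4 := by
  obtain ⟨t, ht⟩ : ∃ t, t = q * (1 - q) := ⟨_, rfl⟩
  have ht0 : 0 < t := by rw [ht]; exact mul_pos h0 (by linarith)
  have ht1 : t ≤ 1 / 4 := by rw [ht]; nlinarith [sq_nonneg (1 - 2 * q)]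
  have eA : q ^ 3 + (1 - q) ^ 3 = 1 - 3 * t := by rw [ht]; ring
  have eB : q ^ 2 + (1 - q) ^ 2 = 1 - 2 * t := by rw [ht]; ring
  rw [eA, eB, ge_iff_le]
  have hlog : Real.log (1 - 2 * t) < 0 := Real.log_neg (by linarith) (by linarith)
  rw [le_div_iff_of_neg hlog]
  have hL := lower_bound t ht0.le ht1
  have hU := mul_le_mul_of_nonneg_left (upper_bound t ht0.le ht1)
    (by linarith : (0 : ℝ) ≤ 3 / 2 + 3 * q / 4)
  have hM := rational_bound q t h0.le h1 ht ht0.le ht1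
  linarith
end

section
/- For every real q with 0 < q ≤ 1/4, the inequality log(1−q) / log(√(q² + (1−q)²)) ≤ 1 + (9/10)·q holds (both logarithms are negative for 0 < q ≤ 1/4, so the quotient is a well-defined positive real). -/
/-!
Since `q² + (1-q)² = (1-q)² (1+t)` with `t = q² / (1-q)²`, clearing the negative denominator turns
the claim into `(1 + 9q/10) log (1+t) ≤ (9/5) q · (-log (1-q))`. Both logarithms are replaced by
Taylor polynomials: `-log (1-q)` is at least `q + q²/2 + q³/3 + q⁴/4` (`neg_log_one_sub_ge`) and
`log (1+t)` is at most `t - t²/2 + t³/3` (`log_one_add_le`). After multiplication by `(1-q)⁶` and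
division by `q²` what remains is a polynomial inequality of degree 9 on `[0, 1/4]`
(`poly_nonneg`), which becomes visible in the variable `s = 1/4 - q`. The orders are chosen
because the inequality is tight at `q = 1/4`, where the two sides of the cleared form differ by
about `4 · 10⁻⁴`.
-/

lemma neg_log_one_sub_ge {q : ℝ} (h0 : 0 ≤ q) (h1 : q < 1) :
    q + q ^ 2 / 2 + q ^ 3 / 3 + q ^ 4 / 4 ≤ -Real.log (1 - q) := by
  have h := Real.hasSum_pow_div_log_of_abs_lt_one (x := q) (by rwa [abs_of_nonneg h0])
  have h2 := sum_le_hasSum (Finset.range 4) (fun i _ => by positivity) h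
  norm_num [Finset.sum_range_succ] at h2
  linarith

lemma log_one_add_le {t : ℝ} (ht : 0 ≤ t) :
    Real.log (1 + t) ≤ t - t ^ 2 / 2 + t ^ 3 / 3 := by
  have hd : ∀ x : ℝ, 0 ≤ x → HasDerivAt
      (fun x : ℝ => x - x ^ 2 / 2 + x ^ 3 / 3 - Real.log (1 + x)) (x ^ 3 / (1 + x)) x := by
    intro x hx
    have hx1 : (1 + x) ≠ 0 := by positivity
    have := ((((hasDerivAt_id x).sub (((hasDerivAt_id x).pow 2).div_const 2)).add
      (((hasDerivAt_id x).pow 3).div_const 3)).sub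
      (((hasDerivAt_id x).const_add 1).log hx1))
    refine this.congr_deriv ?_
    simp only [id]
    field_simp
    push_cast
    ring
  have hm : MonotoneOn (fun x : ℝ => x - x ^ 2 / 2 + x ^ 3 / 3 - Real.log (1 + x))
      (Set.Ici 0) := by
    apply monotoneOn_of_deriv_nonneg (convex_Ici 0)
    · exact fun x hx => (hd x hx).continuousAt.continuousWithinAt
    · intro x hx
      rw [interior_Ici] at hx
      exact (hd x (le_of_lt hx)).differentiableAt.differentiableWithinAt
    · intro x hx
      rw [interior_Ici] at hx
      have hx' : 0 < x := hx
      rw [(hd x hx'.le).deriv]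
      positivity
  have := hm (Set.mem_Ici.2 le_rfl) (Set.mem_Ici.2 ht) ht
  norm_num at this
  linarith

/-- In powers of `s = 1/4 - q` the coefficients up to `s⁶` are positive, and the `s⁶` term alone
dominates the negative terms of higher order on `[0, 1/4]`. -/
lemma poly_nonneg {q : ℝ} (h0 : 0 ≤ q) (h1 : q ≤ 1 / 4) :
    (1 + 9 / 10 * q) * ((1 - q) ^ 4 - q ^ 2 * (1 - q) ^ 2 / 2 + q ^ 4 / 3) ≤
      9 / 5 * (1 + q / 2 + q ^ 2 / 3 + q ^ 3 / 4) * (1 - q) ^ 6 := by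
  obtain ⟨s, rfl⟩ : ∃ s, q = 1 / 4 - s := ⟨1 / 4 - q, by ring⟩
  have hs : 0 ≤ s := by linarith
  have hs' : s ≤ 1 / 4 := by linarith
  have h7 : s ^ 7 ≤ s ^ 6 * (1 / 4) := by
    rw [pow_succ]; gcongr
  have h8 : s ^ 8 ≤ s ^ 7 * (1 / 4) := by
    rw [pow_succ]; gcongr
  have h9 : s ^ 9 ≤ s ^ 8 * (1 / 4) := by
    rw [pow_succ]; gcongr
  have p2 : 0 ≤ s ^ 2 := by positivity
  have p3 : 0 ≤ s ^ 3 := by positivity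
  have p4 : 0 ≤ s ^ 4 := by positivity
  have p5 : 0 ≤ s ^ 5 := by positivity
  have p6 : 0 ≤ s ^ 6 := by positivity
  linarith

theorem stmt_3 (q : ℝ) (h0 : 0 < q) (h1 : q ≤ 1 / 4) :
    Real.log (1 - q) / Real.log (Real.sqrt (q ^ 2 + (1 - q) ^ 2))
      ≤ 1 + (9 / 10) * q := by
  have hu : 0 < 1 - q := by linarith
  have hneg : Real.log (q ^ 2 + (1 - q) ^ 2) < 0 :=
    Real.log_neg (by positivity) (by nlinarith)
  rw [Real.log_sqrt (by positivity), div_le_iff_of_neg (by linarith)]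
  have hsplit : Real.log (q ^ 2 + (1 - q) ^ 2)
      = 2 * Real.log (1 - q) + Real.log (1 + q ^ 2 / (1 - q) ^ 2) := by
    have he : q ^ 2 + (1 - q) ^ 2 = (1 - q) ^ 2 * (1 + q ^ 2 / (1 - q) ^ 2) := by
      field_simp
      ring
    rw [he, Real.log_mul (by positivity) (by positivity), Real.log_pow]
    norm_num
  have hA := neg_log_one_sub_ge h0.le (by linarith : q < 1)
  have hB := log_one_add_le (t := q ^ 2 / (1 - q) ^ 2) (by positivity)
  have hkey : (1 + 9 / 10 * q) * (q ^ 2 / (1 - q) ^ 2 - (q ^ 2 / (1 - q) ^ 2) ^ 2 / 2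
      + (q ^ 2 / (1 - q) ^ 2) ^ 3 / 3) ≤
      9 / 5 * q * (q + q ^ 2 / 2 + q ^ 3 / 3 + q ^ 4 / 4) := by
    have hl : (1 + 9 / 10 * q) * (q ^ 2 / (1 - q) ^ 2 - (q ^ 2 / (1 - q) ^ 2) ^ 2 / 2
        + (q ^ 2 / (1 - q) ^ 2) ^ 3 / 3) = q ^ 2 * ((1 + 9 / 10 * q) *
        ((1 - q) ^ 4 - q ^ 2 * (1 - q) ^ 2 / 2 + q ^ 4 / 3)) / (1 - q) ^ 6 := by
      field_simp
    rw [hl, div_le_iff₀ (by positivity)]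
    have := mul_le_mul_of_nonneg_left (poly_nonneg h0.le h1) (sq_nonneg q)
    linarith
  have hA' := mul_le_mul_of_nonneg_left hA (by positivity : 0 ≤ 9 / 5 * q)
  have hB' := mul_le_mul_of_nonneg_left hB (by positivity : 0 ≤ 1 + 9 / 10 * q)
  rw [hsplit]
  linarith
end
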